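/- Funk-Hecke formula: let f : [-1,1] → ℂ be continuous and Y a spherical harmonic of degree k on Sⁿ. Then ∫_{Sⁿ} f(ξᵀη) Y(ξ) dξ = Y(η) · (|S^{n-1}| / C_k^{(n-1)/2}(1)) · ∫_{-1}^{1} f(t) C_k^{(n-1)/2}(t) (1-t²)^{n/2-1} dt for every η ∈ Sⁿ. -/

import Mathlib

open MeasureTheory
open scoped RealInnerProductSpace

noncomputable section

/-- The Gegenbauer polynomials `C_k^λ`. -/
def gegenbauer (lam : ℝ) : ℕ → Polynomial ℝ
  | 0 => 1
  | 1 => Polynomial.C (2 * lam) * Polynomial.X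
  | (n + 2) =>
      Polynomial.C (2 * ((n : ℝ) + 1 + lam) / ((n : ℝ) + 2)) * Polynomial.X
          * gegenbauer lam (n + 1)
        - Polynomial.C (((n : ℝ) + 2 * lam) / ((n : ℝ) + 2)) * gegenbauer lam n

/-- `Y : EuclideanSpace ℝ (Fin (n+1)) → ℂ` is (the extension of) a spherical harmonic of
degree `k` on `Sⁿ`. -/
def IsSphericalHarmonic (n k : ℕ) (Y : EuclideanSpace ℝ (Fin (n + 1)) → ℂ) : Prop :=
  ∃ P : MvPolynomial (Fin (n + 1)) ℂ,
    P.IsHomogeneous k ∧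
    (∑ i, MvPolynomial.pderiv i (MvPolynomial.pderiv i P)) = 0 ∧
    ∀ x : EuclideanSpace ℝ (Fin (n + 1)),
      Y x = MvPolynomial.eval (fun i => (x i : ℂ)) P

/-- The surface area `|Sᵐ|` of the unit sphere `Sᵐ ⊂ ℝ^{m+1}`. -/
def sphereArea (m : ℕ) : ℝ :=
  (((volume : Measure (EuclideanSpace ℝ (Fin (m + 1)))).toSphere) Set.univ).toReal

/-!
Both sides of the formula are continuous linear functionals of `f ∈ C([-1, 1])`, so by Weierstrass
it suffices to compare them on the monomials `t ^ m`. Integrate `⟪x, η⟫ ^ m * Y x` against the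
weight `exp (-‖x‖² / 2)`. Gaussian integration by parts turns multiplication by `⟪x, η⟫` into the
derivative along `η`, and evaluates the integral as `E[Z ^ m * He_k Z] * Y η` up to normalization,
where `Z` is standard normal and `He_k` is the Hermite polynomial. Polar coordinates turn the same
integral into the spherical moment times a radial Gaussian moment. The three-term recurrence gives
the same Hermite moments for `∫ t ^ m * C_k^λ(t) * (1 - t²) ^ (λ - 1/2) dt`, with the factor
`C_k^λ(1)`.
-/

section Moments

variable {K X X' : Type*} [TopologicalSpace K] [CompactSpace K] [MeasurableSpace K]
  [OpensMeasurableSpace K] [MeasurableSpace X] [MeasurableSpace X']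
  {μ : Measure X} {μ' : Measure X'} {φ : X → K} {φ' : X' → K} {g : X → ℂ} {g' : X' → ℂ}

lemma integrable_continuousMap_comp_mul (hφ : Measurable φ) (hg : Integrable g μ) (f : C(K, ℂ)) :
    Integrable (fun x => f (φ x) * g x) μ :=
  hg.bdd_mul (f.continuous.measurable.comp hφ).aestronglyMeasurable
    (.of_forall fun x => f.norm_coe_le_norm (φ x))

/-- The functional `f ↦ ∫ f ∘ φ · g dμ` on `C(K, ℂ)`, that is, integration against the
push-forward under `φ` of the complex measure with density `g`. -/
def weightedIntegral (hφ : Measurable φ) (hg : Integrable g μ) : C(K, ℂ) →L[ℂ] ℂ :=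
  LinearMap.mkContinuous
    { toFun f := ∫ x, f (φ x) * g x ∂μ
      map_add' f₁ f₂ := by
        simp only [ContinuousMap.add_apply, add_mul]
        exact integral_add (integrable_continuousMap_comp_mul hφ hg f₁)
          (integrable_continuousMap_comp_mul hφ hg f₂)
      map_smul' c f := by
        simp only [ContinuousMap.smul_apply, smul_eq_mul, mul_assoc, RingHom.id_apply,
          integral_const_mul] }
    (∫ x, ‖g x‖ ∂μ) fun f => by
      rw [mul_comm, ← integral_const_mul]
      refine norm_integral_le_of_norm_le (hg.norm.const_mul _) (.of_forall fun x => ?_)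
      rw [norm_mul]
      gcongr
      exact f.norm_coe_le_norm (φ x)

lemma integral_comp_mul_eq_of_dense_span {S : Set C(K, ℂ)}
    (hS : Dense (Submodule.span ℂ S : Set C(K, ℂ)))
    (hφ : Measurable φ) (hg : Integrable g μ) (hφ' : Measurable φ') (hg' : Integrable g' μ')
    (h : ∀ f ∈ S, ∫ x, f (φ x) * g x ∂μ = ∫ x, f (φ' x) * g' x ∂μ') (f : C(K, ℂ)) :
    ∫ x, f (φ x) * g x ∂μ = ∫ x, f (φ' x) * g' x ∂μ' :=
  DFunLike.congr_fun
    (ContinuousLinearMap.ext_on (f := weightedIntegral hφ hg) (g := weightedIntegral hφ' hg')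
      hS h) f

lemma dense_span_range_coord_pow (s : Set ℝ) [CompactSpace s] (x : C(s, ℂ))
    (hx : ∀ t, x t = (t : ℝ)) :
    Dense (Submodule.span ℂ (Set.range fun m : ℕ => x ^ m) : Set C(s, ℂ)) := by
  have hstar : star x = x := by ext t; simp [hx]
  have hspan : (StarAlgebra.adjoin ℂ {x} : Set C(s, ℂ)) =
      Submodule.span ℂ (Set.range fun m : ℕ => x ^ m) := by
    have hpow : (Submonoid.closure {x} : Set C(s, ℂ)) = Set.range fun m : ℕ => x ^ m := by
      rw [← Submonoid.powers_eq_closure, Submonoid.coe_powers]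
    rw [← hpow, ← Algebra.adjoin_eq_span, Subalgebra.coe_toSubmodule,
      ← StarSubalgebra.coe_toSubalgebra, StarAlgebra.adjoin_toSubalgebra, Set.star_singleton, hstar,
      Set.union_self]
  rw [← hspan, ← StarSubalgebra.coe_toSubalgebra]
  have hsep : (StarAlgebra.adjoin ℂ {x}).SeparatesPoints := fun t u htu =>
    ⟨x, ⟨x, StarAlgebra.self_mem_adjoin_singleton ℂ x, rfl⟩,
      by simpa [hx, Subtype.ext_iff] using htu⟩
  simpa [dense_iff_closure_eq, ← StarSubalgebra.topologicalClosure_coe] using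
    congrArg SetLike.coe
      (ContinuousMap.starSubalgebra_topologicalClosure_eq_top_of_separatesPoints _ hsep)

lemma integral_comp_mul_eq_of_moments_eq {s : Set ℝ} [CompactSpace s] {φ : X → s} {φ' : X' → s}
    (hφ : Measurable φ) (hg : Integrable g μ) (hφ' : Measurable φ') (hg' : Integrable g' μ')
    (h : ∀ m : ℕ, ∫ x, ((φ x : ℝ) : ℂ) ^ m * g x ∂μ = ∫ x, ((φ' x : ℝ) : ℂ) ^ m * g' x ∂μ')
    (f : C(s, ℂ)) :
    ∫ x, f (φ x) * g x ∂μ = ∫ x, f (φ' x) * g' x ∂μ' := by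
  let coord : C(s, ℂ) := ⟨fun t => (t : ℝ), by fun_prop⟩
  refine integral_comp_mul_eq_of_dense_span (dense_span_range_coord_pow s coord fun _ => rfl)
    hφ hg hφ' hg' ?_ f
  rintro _ ⟨m, rfl⟩
  exact h m

lemma intervalIntegral_eq_integral_Icc {E : Type*} [NormedAddCommGroup E] [NormedSpace ℝ E]
    {a b : ℝ} (hab : a ≤ b) (f : ℝ → E) :
    ∫ t in a..b, f t = ∫ t : Set.Icc a b, f t ∂(volume.comap Subtype.val) := by
  rw [intervalIntegral.integral_of_le hab, ← integral_Icc_eq_integral_Ioc]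
  exact (integral_subtype_comap measurableSet_Icc f).symm

end Moments

section GaussianAlgebra

/-- `hermiteMoment m k = E[Z ^ m * He_k(Z)]` for a standard Gaussian `Z` and the probabilists'
Hermite polynomial `He_k`, computed by Gaussian integration by parts. -/
def hermiteMoment : ℕ → ℕ → ℕ
  | 0, 0 => 1
  | 0, _ + 1 => 0
  | 1, 0 => 0
  | m + 2, 0 => (m + 1) * hermiteMoment m 0
  | m + 1, k + 1 => (m + 1) * hermiteMoment m k

lemma hermiteMoment_succ_succ (m k : ℕ) :
    hermiteMoment (m + 1) (k + 1) = (m + 1) * hermiteMoment m k := by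
  cases m <;> simp only [hermiteMoment]

lemma hermiteMoment_add_two_right (m k : ℕ) :
    hermiteMoment m (k + 2) + k * hermiteMoment m k = m * hermiteMoment m k := by
  induction k generalizing m with
  | zero => rcases m with _ | _ | m <;> simp [hermiteMoment]
  | succ k ih =>
    cases m with
    | zero => simp [hermiteMoment]
    | succ m =>
      rw [hermiteMoment_succ_succ m (k + 2), hermiteMoment_succ_succ]
      linear_combination (m + 1) * ih m

lemma hermiteMoment_succ_left (m k : ℕ) :
    hermiteMoment (m + 1) k = m * hermiteMoment (m - 1) k + k * hermiteMoment m (k - 1) := by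
  rcases m with _ | m <;> rcases k with _ | _ | k
  · simp [hermiteMoment]
  · simp [hermiteMoment]
  · simp [hermiteMoment]
  · simp [hermiteMoment]
  · rcases m with _ | m <;> simp [hermiteMoment]; ring
  · simp only [hermiteMoment_succ_succ, Nat.add_sub_cancel]
    linear_combination (m + 1) * (hermiteMoment_add_two_right m k).symm

open MvPolynomial

variable {ι R : Type*} [CommRing R]

/-- The derivative `∑ i, η i ∂ᵢ` of polynomials in the direction `η`. -/
def dirDeriv (η : ι → R) : Derivation R (MvPolynomial ι R) (MvPolynomial ι R) :=
  mkDerivation R fun i => C (η i)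

lemma pderiv_dirDeriv_comm (η : ι → R) (i : ι) (P : MvPolynomial ι R) :
    pderiv i (dirDeriv η P) = dirDeriv η (pderiv i P) := by
  classical
  have h : ⁅pderiv i, dirDeriv η⁆ = 0 := derivation_ext fun l => by
    rw [Derivation.commutator_apply]
    simp [dirDeriv, pderiv_X, Pi.single_apply, apply_ite]
  rw [← sub_eq_zero, ← Derivation.commutator_apply, h, Derivation.zero_apply]

lemma dirDeriv_apply [Fintype ι] (η : ι → R) (P : MvPolynomial ι R) :
    dirDeriv η P = ∑ i, η i • pderiv i P := by
  have h : dirDeriv η = ∑ i, η i • pderiv i := derivation_ext fun l => by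
    classical
    rw [← Derivation.coeFnAddMonoidHom_apply (∑ i, _), map_sum, Finset.sum_apply]
    simp [dirDeriv, pderiv_X, Pi.single_apply, smul_eq_C_mul]
  rw [h, ← Derivation.coeFnAddMonoidHom_apply, map_sum, Finset.sum_apply]
  rfl

lemma isHomogeneous_dirDeriv [Finite ι] (η : ι → R) {P : MvPolynomial ι R} {k : ℕ}
    (hP : P.IsHomogeneous k) : (dirDeriv η P).IsHomogeneous (k - 1) := by
  cases nonempty_fintype ι
  rw [dirDeriv_apply]
  exact .sum _ _ _ fun i _ => (homogeneousSubmodule ι R (k - 1)).smul_mem _ hP.pderiv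

lemma eval_dirDeriv_self [Finite ι] (η : ι → R) {P : MvPolynomial ι R} {k : ℕ}
    (hP : P.IsHomogeneous k) : eval η (dirDeriv η P) = k * eval η P := by
  cases nonempty_fintype ι
  simpa [dirDeriv_apply, smul_eval] using congrArg (eval η) hP.sum_X_mul_pderiv

variable [Fintype ι]

lemma laplacian_dirDeriv (η : ι → R) (P : MvPolynomial ι R) :
    ∑ i, pderiv i (pderiv i (dirDeriv η P)) = dirDeriv η (∑ i, pderiv i (pderiv i P)) := by
  simp only [pderiv_dirDeriv_comm, map_sum]

/-- The linear form `x ↦ ∑ i, η i * x i` as a polynomial. -/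
def linearForm (η : ι → R) : MvPolynomial ι R := ∑ i, η i • X i

lemma dirDeriv_linearForm (η : ι → R) : dirDeriv η (linearForm η) = C (η ⬝ᵥ η) := by
  simp [linearForm, dirDeriv, dotProduct, smul_eq_C_mul]

variable {E : MvPolynomial ι R →ₗ[R] R}

lemma map_linearForm_mul (hE : ∀ i Q, E (X i * Q) = E (pderiv i Q)) (η : ι → R)
    (Q : MvPolynomial ι R) : E (linearForm η * Q) = E (dirDeriv η Q) := by
  simp [linearForm, dirDeriv_apply, Finset.sum_mul, hE]

variable [CharZero R] [NoZeroDivisors R]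

lemma map_harmonic_eq (hE : ∀ i Q, E (X i * Q) = E (pderiv i Q)) (η : ι → R)
    {k : ℕ} {P : MvPolynomial ι R} (hP : P.IsHomogeneous k)
    (hΔ : ∑ i, pderiv i (pderiv i P) = 0) :
    E P = hermiteMoment 0 k * eval η P * E 1 := by
  rcases k with _ | k
  · obtain ⟨c, rfl⟩ : ∃ c, P = C c :=
      ⟨_, totalDegree_eq_zero_iff_eq_C.1 ((totalDegree_zero_iff_isHomogeneous _).2 hP)⟩
    simp [hermiteMoment, C_eq_smul_one]
  · have euler : (k + 1) • E P = E (∑ i, pderiv i (pderiv i P)) := by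
      rw [← map_nsmul, ← hP.sum_X_mul_pderiv]
      simp only [map_sum, hE]
    rw [hΔ, map_zero, nsmul_eq_mul, mul_eq_zero] at euler
    simp [hermiteMoment, euler.resolve_left (Nat.cast_ne_zero.2 k.succ_ne_zero)]

theorem map_linearForm_pow_mul_harmonic (hE : ∀ i Q, E (X i * Q) = E (pderiv i Q))
    {η : ι → R} (hη : η ⬝ᵥ η = 1) (m : ℕ) {k : ℕ} {P : MvPolynomial ι R} (hP : P.IsHomogeneous k)
    (hΔ : ∑ i, pderiv i (pderiv i P) = 0) :
    E (linearForm η ^ m * P) = hermiteMoment m k * eval η P * E 1 := by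
  induction m using Nat.strong_induction_on generalizing k P with
  | _ m ih =>
    rcases m with _ | m
    · rw [pow_zero, one_mul, map_harmonic_eq hE η hP hΔ]
    · have hderiv : dirDeriv η (linearForm η ^ m * P) =
          linearForm η ^ m * dirDeriv η P + m • (linearForm η ^ (m - 1) * P) := by
        rw [Derivation.leibniz, Derivation.leibniz_pow, dirDeriv_linearForm, hη]
        simp only [smul_eq_mul, map_one, mul_one, nsmul_eq_mul]
        ring
      have hlower : m • E (linearForm η ^ (m - 1) * P) =
          m • (hermiteMoment (m - 1) k * eval η P * E 1) := by
        rcases m with _ | m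
        · simp only [zero_smul]
        · rw [ih _ (by omega) hP hΔ]
      rw [pow_succ', mul_assoc, map_linearForm_mul hE, hderiv, map_add, map_nsmul, hlower,
        ih m m.lt_succ_self (isHomogeneous_dirDeriv η hP)
          (by rw [laplacian_dirDeriv, hΔ, map_zero]),
        eval_dirDeriv_self η hP, hermiteMoment_succ_left]
      push_cast
      ring

end GaussianAlgebra

section GaussianIntegral

open MvPolynomial Asymptotics

/-- The radial profile `exp (-r² / 2)` of the (unnormalized) standard Gaussian density. -/
def gaussianProfile (r : ℝ) : ℝ := Real.exp (-(1 / 2) * r ^ 2)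

lemma continuous_gaussianProfile : Continuous gaussianProfile := by
  unfold gaussianProfile
  fun_prop

variable {ι : Type*}

/-- A point of real Euclidean space seen as a point of `ℂ^ι`, at which polynomials with complex
coefficients can be evaluated. -/
def complexify (x : EuclideanSpace ℝ ι) : ι → ℂ := fun i => x i

lemma complexify_smul (r : ℝ) (x : EuclideanSpace ℝ ι) :
    complexify (r • x) = (r : ℂ) • complexify x := by
  ext i
  simp [complexify]

lemma continuous_eval_complexify (P : MvPolynomial ι ℂ) :
    Continuous fun x : EuclideanSpace ℝ ι => eval (complexify x) P :=
  P.continuous_eval.comp (by unfold complexify; fun_prop)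

lemma hasLineDerivAt_eval_complexify (P : MvPolynomial ι ℂ) (x v : EuclideanSpace ℝ ι) :
    HasLineDerivAt ℝ (fun y => eval (complexify y) P)
      (eval (complexify x) (dirDeriv (complexify v) P)) x v := by
  unfold HasLineDerivAt
  induction P using MvPolynomial.induction_on with
  | C a => simpa [dirDeriv] using hasDerivAt_const (0 : ℝ) a
  | add p q hp hq =>
    simp only [map_add]
    exact hp.add hq
  | mul_X p i hp =>
    have hcoord : HasDerivAt (fun t : ℝ => complexify (x + t • v) i) (complexify v i) 0 := by
      have h := (((hasDerivAt_id (0 : ℝ)).mul_const (v i)).const_add (x i)).ofReal_comp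
      simpa [complexify] using h
    simp only [map_mul, eval_X]
    refine (hp.mul hcoord).congr_deriv ?_
    simp only [dirDeriv, zero_smul, add_zero, Derivation.leibniz, mkDerivation_X, smul_eq_mul,
      map_add, map_mul, eval_C, eval_X]
    ring

variable [Fintype ι]

lemma eval_linearForm_complexify (x v : EuclideanSpace ℝ ι) :
    eval (complexify x) (linearForm (complexify v)) = (⟪x, v⟫ : ℝ) := by
  simp only [linearForm, map_sum, smul_eval, eval_X]
  simp [complexify, PiLp.inner_apply]

lemma isBigO_norm_exp_mul_sq {V : Type*} [SeminormedAddCommGroup V] {b : ℝ} (hb : 0 < b) :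
    (fun x : V => ‖x‖) =O[⊤] fun x => Real.exp (b * ‖x‖ ^ 2) := by
  refine .of_bound (1 + b⁻¹) (.of_forall fun x => ?_)
  rw [norm_norm, Real.norm_of_nonneg (Real.exp_pos _).le]
  calc ‖x‖ ≤ 1 + b⁻¹ + b * ‖x‖ ^ 2 + ‖x‖ ^ 2 := by
        nlinarith [sq_nonneg (‖x‖ - 1), inv_pos.2 hb, mul_nonneg hb.le (sq_nonneg ‖x‖)]
    _ = (1 + b⁻¹) * (b * ‖x‖ ^ 2 + 1) := by field_simp; ring
    _ ≤ (1 + b⁻¹) * Real.exp (b * ‖x‖ ^ 2) := by gcongr; exact Real.add_one_le_exp _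

lemma isBigO_eval_complexify (P : MvPolynomial ι ℂ) {b : ℝ} (hb : 0 < b) :
    (fun x : EuclideanSpace ℝ ι => eval (complexify x) P) =O[⊤]
      fun x => Real.exp (b * ‖x‖ ^ 2) := by
  induction P using MvPolynomial.induction_on generalizing b with
  | C a =>
    simp only [eval_C]
    refine .of_bound ‖a‖ (.of_forall fun x => le_mul_of_one_le_right (norm_nonneg a) ?_)
    rw [Real.norm_of_nonneg (Real.exp_pos _).le]
    exact Real.one_le_exp (by positivity)
  | add p q hp hq => simpa only [map_add] using (hp hb).add (hq hb)
  | mul_X p i hp =>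
    have hcoord : (fun x : EuclideanSpace ℝ ι => complexify x i) =O[⊤]
        fun x => Real.exp (b / 2 * ‖x‖ ^ 2) :=
      (IsBigO.of_norm_le fun x => by
        simpa [complexify] using PiLp.norm_apply_le x i).trans
          (isBigO_norm_exp_mul_sq (half_pos hb))
    simpa only [map_mul, eval_X, ← Real.exp_add, ← add_mul, add_halves] using
      (hp (half_pos hb)).mul hcoord

lemma integrable_exp_neg_mul_sq_norm {V : Type*} [NormedAddCommGroup V] [InnerProductSpace ℝ V]
    [FiniteDimensional ℝ V] [MeasurableSpace V] [BorelSpace V] {b : ℝ} (hb : 0 < b) :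
    Integrable fun x : V => Real.exp (-b * ‖x‖ ^ 2) := by
  refine (GaussianFourier.integrable_cexp_neg_mul_sq_norm_add (V := V) (b := b) (by simpa) 0
    0).norm.congr (.of_forall fun x => ?_)
  simp [Complex.norm_exp, ← Complex.ofReal_pow]

lemma integrable_eval_mul_gaussian (P : MvPolynomial ι ℂ) :
    Integrable fun x : EuclideanSpace ℝ ι => eval (complexify x) P * gaussianProfile ‖x‖ := by
  have hweight (r : ℝ) : Real.exp (1 / 4 * r ^ 2) * ‖(gaussianProfile r : ℂ)‖ =
      Real.exp (-(1 / 4) * r ^ 2) := by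
    rw [gaussianProfile, Complex.norm_real, Real.norm_of_nonneg (Real.exp_pos _).le, ← Real.exp_add]
    ring_nf
  have hgrowth : (fun x : EuclideanSpace ℝ ι => eval (complexify x) P * gaussianProfile ‖x‖) =O[⊤]
      fun x => Real.exp (-(1 / 4) * ‖x‖ ^ 2) := by
    simpa only [hweight] using (isBigO_eval_complexify P (b := 1 / 4) (by norm_num)).mul
      (isBigO_refl (fun x => (gaussianProfile ‖x‖ : ℂ)) ⊤).norm_right
  exact hgrowth.integrable ((continuous_eval_complexify P).mul (Complex.continuous_ofReal.comp
    (continuous_gaussianProfile.comp continuous_norm))).aestronglyMeasurable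
    (integrable_exp_neg_mul_sq_norm (by norm_num))

/-- The integral of a polynomial against the unnormalized Gaussian weight `exp (-‖x‖² / 2)`. -/
def gaussianIntegral : MvPolynomial ι ℂ →ₗ[ℂ] ℂ where
  toFun P := ∫ x : EuclideanSpace ℝ ι, eval (complexify x) P * gaussianProfile ‖x‖
  map_add' P Q := by
    simp only [map_add, add_mul]
    exact integral_add (integrable_eval_mul_gaussian P) (integrable_eval_mul_gaussian Q)
  map_smul' c P := by
    simp only [smul_eval, mul_assoc, RingHom.id_apply, smul_eq_mul, integral_const_mul]

lemma gaussianIntegral_apply (P : MvPolynomial ι ℂ) : gaussianIntegral P =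
    ∫ x : EuclideanSpace ℝ ι, eval (complexify x) P * gaussianProfile ‖x‖ := rfl

lemma gaussianIntegral_one :
    gaussianIntegral (1 : MvPolynomial ι ℂ) =
      ((2 * Real.pi) ^ ((Fintype.card ι : ℝ) / 2) : ℝ) := by
  simp only [gaussianIntegral_apply, gaussianProfile, map_one, one_mul]
  rw [integral_complex_ofReal, GaussianFourier.integral_rexp_neg_mul_sq_norm (by norm_num),
    finrank_euclideanSpace, div_div_eq_mul_div, div_one, mul_comm]

lemma hasLineDerivAt_gaussianProfile_norm {V : Type*} [NormedAddCommGroup V]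
    [InnerProductSpace ℝ V] (x v : V) :
    HasLineDerivAt ℝ (fun y : V => gaussianProfile ‖y‖) (-⟪x, v⟫ * gaussianProfile ‖x‖) x v := by
  have h := ((hasStrictFDerivAt_norm_sq x).hasFDerivAt.const_mul (-(1 / 2))).exp.hasLineDerivAt v
  refine h.congr_deriv ?_
  simp only [smul_apply, coe_innerSL_apply, nsmul_eq_mul, Nat.cast_ofNat, smul_eq_mul,
    gaussianProfile]
  ring

theorem gaussianIntegral_linearForm_mul (v : EuclideanSpace ℝ ι) (P : MvPolynomial ι ℂ) :
    gaussianIntegral (linearForm (complexify v) * P) =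
      gaussianIntegral (dirDeriv (complexify v) P) := by
  have hint : Integrable fun x : EuclideanSpace ℝ ι =>
      eval (complexify x) P * ((-⟪x, v⟫ * gaussianProfile ‖x‖ : ℝ) : ℂ) := by
    refine (integrable_eval_mul_gaussian (linearForm (complexify v) * P)).neg.congr
      (.of_forall fun x => ?_)
    simp only [map_mul, eval_linearForm_complexify, Pi.neg_apply, Complex.ofReal_neg,
      Complex.ofReal_mul]
    ring
  have h := integral_bilinear_hasLineDerivAt_right_eq_neg_left_of_integrable
    (B := ContinuousLinearMap.mul ℝ ℂ) (integrable_eval_mul_gaussian (dirDeriv (complexify v) P))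
    hint (integrable_eval_mul_gaussian P) (fun x _ => hasLineDerivAt_eval_complexify P x v)
    (fun x _ => (hasLineDerivAt_gaussianProfile_norm x v).ofReal_comp)
  calc gaussianIntegral (linearForm (complexify v) * P)
      = -∫ x : EuclideanSpace ℝ ι,
          eval (complexify x) P * ((-⟪x, v⟫ * gaussianProfile ‖x‖ : ℝ) : ℂ) := by
        rw [gaussianIntegral_apply, ← integral_neg]
        congr with x
        simp only [map_mul, eval_linearForm_complexify, Complex.ofReal_neg, Complex.ofReal_mul]
        ring
    _ = gaussianIntegral (dirDeriv (complexify v) P) := by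
        rw [gaussianIntegral_apply, neg_eq_iff_eq_neg]
        exact h

lemma gaussianIntegral_X_mul (i : ι) (P : MvPolynomial ι ℂ) :
    gaussianIntegral (X i * P) = gaussianIntegral (pderiv i P) := by
  classical
  have hsingle : complexify (EuclideanSpace.single i 1) = Pi.single i 1 := by
    ext j
    simp [complexify, Pi.single_apply, apply_ite]
  have h := gaussianIntegral_linearForm_mul (EuclideanSpace.single i 1) P
  rw [hsingle] at h
  simpa [linearForm, dirDeriv_apply, Pi.single_apply] using h

end GaussianIntegral

section PolarCoordinates

lemma integral_volumeIoiPow {F : Type*} [NormedAddCommGroup F] [NormedSpace ℝ F] (n : ℕ)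
    (f : ℝ → F) :
    ∫ r : Set.Ioi (0 : ℝ), f r ∂.volumeIoiPow n = ∫ r in Set.Ioi (0 : ℝ), r ^ n • f r := by
  simp only [Measure.volumeIoiPow, ENNReal.ofReal]
  rw [integral_withDensity_eq_integral_smul (measurable_subtype_coe.pow_const _).real_toNNReal,
    integral_subtype_comap measurableSet_Ioi fun r : ℝ => Real.toNNReal (r ^ n) • f r]
  refine setIntegral_congr_fun measurableSet_Ioi fun r hr => ?_
  simp only [NNReal.smul_def, Real.coe_toNNReal _ (pow_nonneg (Set.mem_Ioi.1 hr).le n)]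

variable {V : Type*} [NormedAddCommGroup V] [NormedSpace ℝ V] [FiniteDimensional ℝ V]
  [Nontrivial V] [MeasurableSpace V] [BorelSpace V]

theorem integral_homogeneous_mul_fun_norm (μ : Measure V) [μ.IsAddHaarMeasure] {d : ℕ} {F : V → ℂ}
    (hF : ∀ (r : ℝ) x, F (r • x) = (r : ℂ) ^ d * F x) (g : ℝ → ℝ) :
    ∫ x, F x * g ‖x‖ ∂μ =
      (∫ ξ : Metric.sphere (0 : V) 1, F ξ ∂μ.toSphere) *
        (∫ r in Set.Ioi (0 : ℝ), r ^ (d + (Module.finrank ℝ V - 1)) * g r : ℝ) := by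
  have hpolar (x : ({0}ᶜ : Set V)) : F x * g ‖(x : V)‖ =
      F (‖(x : V)‖⁻¹ • (x : V)) * (‖(x : V)‖ ^ d * g ‖(x : V)‖ : ℝ) := by
    conv_lhs => rw [← smul_inv_smul₀ (norm_ne_zero_iff.2 x.2) (x : V), hF]
    simp only [smul_inv_smul₀ (norm_ne_zero_iff.2 x.2)]
    push_cast
    ring
  calc ∫ x, F x * g ‖x‖ ∂μ
      = ∫ x : ({0}ᶜ : Set V), F x * g ‖(x : V)‖ ∂(μ.comap (↑)) := by
        rw [integral_subtype_comap (measurableSet_singleton _).compl fun x => F x * g ‖x‖,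
          restrict_compl_singleton]
    _ = ∫ z, F z.1 * ((z.2 : ℝ) ^ d * g z.2 : ℝ)
          ∂μ.toSphere.prod (.volumeIoiPow (Module.finrank ℝ V - 1)) := by
        rw [← μ.measurePreserving_homeomorphUnitSphereProd.integral_comp
          (Homeomorph.measurableEmbedding _)]
        refine integral_congr_ae (.of_forall fun x => ?_)
        simpa only [homeomorphUnitSphereProd_apply_fst_coe, homeomorphUnitSphereProd_apply_snd_coe]
          using hpolar x
    _ = (∫ ξ : Metric.sphere (0 : V) 1, F ξ ∂μ.toSphere) *
          ∫ r : Set.Ioi (0 : ℝ), (((r : ℝ) ^ d * g r : ℝ) : ℂ)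
            ∂.volumeIoiPow (Module.finrank ℝ V - 1) :=
        integral_prod_mul (fun ξ : Metric.sphere (0 : V) 1 => F ξ)
          (fun r : Set.Ioi (0 : ℝ) => (((r : ℝ) ^ d * g r : ℝ) : ℂ))
    _ = _ := by
        rw [integral_complex_ofReal, integral_volumeIoiPow _ fun r => r ^ d * g r]
        simp only [smul_eq_mul, ← mul_assoc, ← pow_add, add_comm d]

/-- The radial Gaussian moment `∫₀^∞ r ^ p * exp (-r² / 2) dr`. -/
def gaussianRadialMoment (p : ℝ) : ℝ := ∫ r in Set.Ioi (0 : ℝ), r ^ p * gaussianProfile r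

lemma gaussianRadialMoment_eq {p : ℝ} (hp : -1 < p) :
    gaussianRadialMoment p = 2 ^ ((p - 1) / 2) * Real.Gamma ((p + 1) / 2) := by
  have h := integral_rpow_mul_exp_neg_mul_rpow two_pos hp one_half_pos
  simp only [Real.rpow_two] at h
  rw [gaussianRadialMoment]
  simp only [gaussianProfile]
  rw [h, one_div, Real.inv_rpow two_pos.le, ← Real.rpow_neg two_pos.le, ← div_eq_mul_inv,
    ← Real.rpow_sub_one two_ne_zero]
  ring_nf

lemma gaussianRadialMoment_pos {p : ℝ} (hp : -1 < p) : 0 < gaussianRadialMoment p := by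
  rw [gaussianRadialMoment_eq hp]
  have := Real.Gamma_pos_of_pos (show 0 < (p + 1) / 2 by linarith)
  positivity

lemma gaussianRadialMoment_add_two {p : ℝ} (hp : -1 < p) :
    gaussianRadialMoment (p + 2) = (p + 1) * gaussianRadialMoment p := by
  rw [gaussianRadialMoment_eq hp, gaussianRadialMoment_eq (by linarith),
    show (p + 2 + 1) / 2 = (p + 1) / 2 + 1 by ring, Real.Gamma_add_one (by linarith),
    show (p + 2 - 1) / 2 = (p - 1) / 2 + 1 by ring, Real.rpow_add_one two_ne_zero]
  ring

end PolarCoordinates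

section SphereMoments

open MvPolynomial

variable {ι : Type*}

lemma complexify_dotProduct_self [Fintype ι] (x : EuclideanSpace ℝ ι) :
    complexify x ⬝ᵥ complexify x = ((‖x‖ ^ 2 : ℝ) : ℂ) := by
  rw [EuclideanSpace.real_norm_sq_eq]
  simp [complexify, dotProduct, sq]

lemma eval_smul_of_isHomogeneous {R : Type*} [CommSemiring R] {k : ℕ} {P : MvPolynomial ι R}
    (hP : P.IsHomogeneous k) (r : R) (x : ι → R) : eval (r • x) P = r ^ k * eval x P := by
  rw [eval_eq, eval_eq, Finset.mul_sum]
  refine Finset.sum_congr rfl fun d hd => ?_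
  have hdeg : ∑ i ∈ d.support, d i = k := hP.degree_eq_sum_deg_support hd |>.symm
  simp only [Pi.smul_apply, smul_eq_mul, mul_pow, Finset.prod_mul_distrib,
    Finset.prod_pow_eq_pow_sum, hdeg]
  ring

variable [Fintype ι] [Nonempty ι]

theorem integral_sphere_inner_pow_mul_harmonic {η : EuclideanSpace ℝ ι} (hη : ‖η‖ = 1) (m : ℕ)
    {k : ℕ} {P : MvPolynomial ι ℂ} (hP : P.IsHomogeneous k)
    (hΔ : ∑ i, pderiv i (pderiv i P) = 0) :
    (∫ ξ : Metric.sphere (0 : EuclideanSpace ℝ ι) 1,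
        ((⟪(ξ : EuclideanSpace ℝ ι), η⟫ : ℝ) : ℂ) ^ m * eval (complexify ξ) P
          ∂(volume : Measure (EuclideanSpace ℝ ι)).toSphere) *
        gaussianRadialMoment ((m + k : ℕ) + (Fintype.card ι - 1 : ℕ)) =
      hermiteMoment m k * eval (complexify η) P *
        ((2 * Real.pi) ^ ((Fintype.card ι : ℝ) / 2) : ℝ) := by
  have hη' : complexify η ⬝ᵥ complexify η = 1 := by simp [complexify_dotProduct_self, hη]
  have hmoment : gaussianIntegral (linearForm (complexify η) ^ m * P) =
      hermiteMoment m k * eval (complexify η) P * gaussianIntegral 1 :=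
    map_linearForm_pow_mul_harmonic gaussianIntegral_X_mul hη' m hP hΔ
  have hhom (r : ℝ) (x : EuclideanSpace ℝ ι) :
      ((⟪r • x, η⟫ : ℝ) : ℂ) ^ m * eval (complexify (r • x)) P =
        (r : ℂ) ^ (m + k) * (((⟪x, η⟫ : ℝ) : ℂ) ^ m * eval (complexify x) P) := by
    rw [complexify_smul, eval_smul_of_isHomogeneous hP, real_inner_smul_left]
    push_cast
    ring
  rw [← gaussianIntegral_one, ← hmoment, gaussianIntegral_apply]
  simp only [map_mul, map_pow, eval_linearForm_complexify]
  rw [integral_homogeneous_mul_fun_norm volume hhom, gaussianRadialMoment]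
  simp only [finrank_euclideanSpace, ← Nat.cast_add, Real.rpow_natCast]

lemma toSphere_univ_mul_gaussianRadialMoment :
    ((volume : Measure (EuclideanSpace ℝ ι)).toSphere).real Set.univ *
        gaussianRadialMoment (Fintype.card ι - 1 : ℕ) =
      (2 * Real.pi) ^ ((Fintype.card ι : ℝ) / 2) := by
  have hpolar := integral_homogeneous_mul_fun_norm (volume : Measure (EuclideanSpace ℝ ι)) (d := 0)
    (F := fun _ => 1) (by simp) gaussianProfile
  have hone := gaussianIntegral_one (ι := ι)
  simp only [gaussianIntegral_apply, map_one] at hone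
  rw [hone, integral_const, Complex.real_smul, mul_one, zero_add, finrank_euclideanSpace] at hpolar
  rw [gaussianRadialMoment]
  simp only [Real.rpow_natCast]
  exact_mod_cast hpolar.symm

end SphereMoments

section GegenbauerMoments

lemma integral_rpow_mul_one_sub_rpow {a b : ℝ} (ha : 0 < a) (hb : 0 < b) :
    ∫ u in (0 : ℝ)..1, u ^ (a - 1) * (1 - u) ^ (b - 1) =
      Real.Gamma a * Real.Gamma b / Real.Gamma (a + b) := by
  have hcast : Complex.betaIntegral a b =
      ((∫ u in (0 : ℝ)..1, u ^ (a - 1) * (1 - u) ^ (b - 1) : ℝ) : ℂ) := by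
    rw [Complex.betaIntegral, ← intervalIntegral.integral_ofReal]
    refine intervalIntegral.integral_congr fun u hu => ?_
    rw [Set.uIcc_of_le zero_le_one] at hu
    push_cast [Complex.ofReal_cpow hu.1, Complex.ofReal_cpow (sub_nonneg.2 hu.2)]
    rfl
  rw [← ProbabilityTheory.beta, ProbabilityTheory.beta_eq_betaIntegralReal a b ha hb, hcast,
    Complex.ofReal_re]

/-- The weight `(1 - t²) ^ (λ - 1/2)` on `[-1, 1]` for which the Gegenbauer polynomials of
parameter `λ` are orthogonal. -/
def gegenbauerWeight (lam t : ℝ) : ℝ := (1 - t ^ 2) ^ (lam - 1 / 2)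

variable {lam : ℝ}

lemma continuous_gegenbauerWeight (hlam : 1 / 2 ≤ lam) : Continuous (gegenbauerWeight lam) := by
  unfold gegenbauerWeight
  exact (by fun_prop : Continuous fun t : ℝ => 1 - t ^ 2).rpow_const
    fun _ => .inr (sub_nonneg.2 hlam)

lemma gegenbauerWeight_neg (t : ℝ) : gegenbauerWeight lam (-t) = gegenbauerWeight lam t := by
  rw [gegenbauerWeight, gegenbauerWeight, neg_sq]

lemma gegenbauerWeight_add_one (hlam : -1 / 2 < lam) {t : ℝ} (ht : t ∈ Set.Icc (-1) 1) :
    gegenbauerWeight (lam + 1) t = (1 - t ^ 2) * gegenbauerWeight lam t := by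
  have hnonneg : 0 ≤ 1 - t ^ 2 := by nlinarith [ht.1, ht.2]
  rw [gegenbauerWeight, gegenbauerWeight, ← Real.rpow_one_add' hnonneg (by linarith)]
  ring_nf

lemma gegenbauerWeight_two_mul_sub_one {u : ℝ} (hu : u ∈ Set.Icc 0 1) :
    gegenbauerWeight lam (2 * u - 1) =
      2 ^ (2 * lam - 1) * (u ^ (lam + 1 / 2 - 1) * (1 - u) ^ (lam + 1 / 2 - 1)) := by
  have hu' : 0 ≤ 1 - u := sub_nonneg.2 hu.2
  rw [gegenbauerWeight, show 1 - (2 * u - 1) ^ 2 = 2 ^ (2 : ℝ) * (u * (1 - u)) by norm_num; ring,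
    Real.mul_rpow (by positivity) (mul_nonneg hu.1 hu'), Real.mul_rpow hu.1 hu',
    ← Real.rpow_mul zero_le_two]
  ring_nf

lemma integral_gegenbauerWeight (hlam : -1 / 2 < lam) :
    ∫ t in (-1 : ℝ)..1, gegenbauerWeight lam t =
      2 ^ (2 * lam) * (Real.Gamma (lam + 1 / 2) * Real.Gamma (lam + 1 / 2) /
        Real.Gamma (2 * lam + 1)) := by
  have hsubst : ∫ t in (-1 : ℝ)..1, gegenbauerWeight lam t =
      2 * ∫ u in (0 : ℝ)..1, gegenbauerWeight lam (2 * u - 1) := by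
    rw [intervalIntegral.mul_integral_comp_mul_sub]
    norm_num
  have hbeta : ∫ u in (0 : ℝ)..1, gegenbauerWeight lam (2 * u - 1) =
      2 ^ (2 * lam - 1) * ∫ u in (0 : ℝ)..1,
        u ^ (lam + 1 / 2 - 1) * (1 - u) ^ (lam + 1 / 2 - 1) := by
    rw [← intervalIntegral.integral_const_mul]
    refine intervalIntegral.integral_congr fun u hu => gegenbauerWeight_two_mul_sub_one ?_
    rwa [Set.uIcc_of_le zero_le_one] at hu
  rw [hsubst, hbeta, integral_rpow_mul_one_sub_rpow (by linarith) (by linarith), ← mul_assoc,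
    mul_comm 2, ← Real.rpow_add_one two_ne_zero]
  ring_nf

lemma integral_gegenbauerWeight_mul_gaussianRadialMoment (hlam : -1 / 2 < lam) :
    (∫ t in (-1 : ℝ)..1, gegenbauerWeight lam t) * gaussianRadialMoment (2 * lam + 1) =
      √(2 * Real.pi) * gaussianRadialMoment (2 * lam) := by
  have hduplication := Real.Gamma_mul_Gamma_add_half (lam + 1 / 2)
  have hΓ : Real.Gamma (2 * lam + 1) ≠ 0 := (Real.Gamma_pos_of_pos (by linarith)).ne'
  rw [integral_gegenbauerWeight hlam, gaussianRadialMoment_eq (by linarith),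
    gaussianRadialMoment_eq (by linarith), Real.sqrt_mul zero_le_two, Real.sqrt_eq_rpow 2,
    show (2 * lam - 1) / 2 = lam - 1 / 2 by ring, show (2 * lam + 1 - 1) / 2 = lam by ring,
    show (2 * lam + 1) / 2 = lam + 1 / 2 by ring,
    show (2 * lam + 1 + 1) / 2 = lam + 1 / 2 + 1 / 2 by ring]
  rw [show 1 - 2 * (lam + 1 / 2) = -(2 * lam) by ring, Real.rpow_neg zero_le_two,
    show 2 * (lam + 1 / 2) = 2 * lam + 1 by ring] at hduplication
  have hpow : (2 : ℝ) ^ (1 / 2 : ℝ) * 2 ^ (lam - 1 / 2) = 2 ^ lam := by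
    rw [← Real.rpow_add two_pos, add_sub_cancel]
  have hpow_ne : (2 : ℝ) ^ (2 * lam) ≠ 0 := by positivity
  rw [← div_eq_mul_inv, div_mul_eq_mul_div, eq_div_iff hpow_ne] at hduplication
  rw [← hpow, mul_div_assoc', div_mul_eq_mul_div, div_eq_iff hΓ]
  linear_combination 2 ^ (1 / 2 : ℝ) * 2 ^ (lam - 1 / 2) * Real.Gamma (lam + 1 / 2) * hduplication

lemma integral_pow_add_two_mul_gegenbauerWeight (hlam : 1 / 2 ≤ lam) (m : ℕ) :
    (m + 2 * lam + 2) * ∫ t in (-1 : ℝ)..1, t ^ (m + 2) * gegenbauerWeight lam t =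
      (m + 1) * ∫ t in (-1 : ℝ)..1, t ^ m * gegenbauerWeight lam t := by
  have hw := continuous_gegenbauerWeight hlam
  have hweight' (t : ℝ) : HasDerivAt (gegenbauerWeight (lam + 1))
      (-(2 * lam + 1) * t * gegenbauerWeight lam t) t := by
    have h := (((hasDerivAt_id t).pow 2).const_sub 1).rpow_const (p := lam + 1 - 1 / 2)
      (.inr (by linarith))
    refine h.congr_deriv ?_
    simp only [Nat.cast_ofNat, id_eq, Nat.add_one_sub_one, pow_one, Pi.pow_apply,
      gegenbauerWeight]
    ring_nf
  have hderiv (t : ℝ) (ht : t ∈ Set.uIcc (-1) 1) :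
      HasDerivAt (fun t => t ^ (m + 1) * gegenbauerWeight (lam + 1) t)
        ((m + 1) * (t ^ m * gegenbauerWeight lam t) -
          (m + 2 * lam + 2) * (t ^ (m + 2) * gegenbauerWeight lam t)) t := by
    refine ((hasDerivAt_pow (m + 1) t).mul (hweight' t)).congr_deriv ?_
    rw [gegenbauerWeight_add_one (by linarith) (by rwa [Set.uIcc_of_le (by norm_num)] at ht)]
    push_cast
    ring
  have hboundary (t : ℝ) (ht : t ^ 2 = 1) : gegenbauerWeight (lam + 1) t = 0 := by
    rw [gegenbauerWeight, ht, sub_self, Real.zero_rpow (by linarith)]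
  have h := intervalIntegral.integral_eq_sub_of_hasDerivAt hderiv
    (Continuous.intervalIntegrable (by fun_prop) _ _)
  rw [intervalIntegral.integral_sub (Continuous.intervalIntegrable (by fun_prop) _ _)
    (Continuous.intervalIntegrable (by fun_prop) _ _), intervalIntegral.integral_const_mul,
    intervalIntegral.integral_const_mul, hboundary 1 (by norm_num), hboundary (-1) (by norm_num),
    mul_zero, mul_zero, sub_self] at h
  exact (sub_eq_zero.1 h).symm

lemma integral_id_mul_gegenbauerWeight :
    ∫ t in (-1 : ℝ)..1, t * gegenbauerWeight lam t = 0 := by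
  have h := intervalIntegral.integral_comp_neg (a := (-1 : ℝ)) (b := 1)
    fun t => t * gegenbauerWeight lam t
  simp only [neg_mul, gegenbauerWeight_neg, intervalIntegral.integral_neg, neg_neg] at h
  linarith

lemma integral_pow_mul_gegenbauerWeight (hlam : 1 / 2 ≤ lam) (m : ℕ) :
    (∫ t in (-1 : ℝ)..1, t ^ m * gegenbauerWeight lam t) *
        gaussianRadialMoment (m + 2 * lam + 1) =
      hermiteMoment m 0 * (√(2 * Real.pi) * gaussianRadialMoment (2 * lam)) := by
  induction m using Nat.twoStepInduction with
  | zero =>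
    simpa [hermiteMoment] using
      integral_gegenbauerWeight_mul_gaussianRadialMoment (show -1 / 2 < lam by linarith)
  | one => simp [hermiteMoment, integral_id_mul_gegenbauerWeight]
  | more m ih _ =>
    have hrec := integral_pow_add_two_mul_gegenbauerWeight hlam m
    have hradial := gaussianRadialMoment_add_two (p := m + 2 * lam + 1)
      (by linarith [(Nat.cast_nonneg m : (0 : ℝ) ≤ m)])
    rw [show ((m + 2 : ℕ) : ℝ) + 2 * lam + 1 = m + 2 * lam + 1 + 2 by push_cast; ring, hradial,
      hermiteMoment]
    push_cast
    linear_combination (m + 1) * ih + gaussianRadialMoment (m + 2 * lam + 1) * hrec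

lemma succ_mul_eval_one_gegenbauer_succ (lam : ℝ) (k : ℕ) :
    (k + 1) * (gegenbauer lam (k + 1)).eval 1 = (k + 2 * lam) * (gegenbauer lam k).eval 1 := by
  induction k with
  | zero => simp [gegenbauer]
  | succ k ih =>
    simp only [gegenbauer, Polynomial.eval_sub, Polynomial.eval_mul, Polynomial.eval_C,
      Polynomial.eval_X]
    push_cast
    field_simp
    linear_combination (k + 2) * ih

lemma eval_one_gegenbauer_pos (hlam : 0 < lam) (k : ℕ) : 0 < (gegenbauer lam k).eval 1 := by
  induction k with
  | zero => simp [gegenbauer]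
  | succ k ih =>
    have h : 0 < (k + 1) * (gegenbauer lam (k + 1)).eval 1 := by
      rw [succ_mul_eval_one_gegenbauer_succ]
      positivity
    exact pos_of_mul_pos_right h (by positivity)

lemma integral_pow_mul_gegenbauer_add_two (hlam : 1 / 2 ≤ lam) (k m : ℕ) :
    (k + 2) * ∫ t in (-1 : ℝ)..1, t ^ m * ((gegenbauer lam (k + 2)).eval t * gegenbauerWeight lam t)
      = 2 * (k + 1 + lam) * (∫ t in (-1 : ℝ)..1,
          t ^ (m + 1) * ((gegenbauer lam (k + 1)).eval t * gegenbauerWeight lam t)) -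
        (k + 2 * lam) * ∫ t in (-1 : ℝ)..1,
          t ^ m * ((gegenbauer lam k).eval t * gegenbauerWeight lam t) := by
  have hw := continuous_gegenbauerWeight hlam
  simp only [← intervalIntegral.integral_const_mul]
  rw [← intervalIntegral.integral_sub (Continuous.intervalIntegrable (by fun_prop) _ _)
    (Continuous.intervalIntegrable (by fun_prop) _ _)]
  congr with t
  simp only [gegenbauer, Polynomial.eval_sub, Polynomial.eval_mul, Polynomial.eval_C,
    Polynomial.eval_X]
  field_simp
  ring

lemma integral_pow_mul_gegenbauer_one (m : ℕ) :
    ∫ t in (-1 : ℝ)..1, t ^ m * ((gegenbauer lam 1).eval t * gegenbauerWeight lam t) =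
      2 * lam * ∫ t in (-1 : ℝ)..1, t ^ (m + 1) * gegenbauerWeight lam t := by
  rw [← intervalIntegral.integral_const_mul]
  congr with t
  simp only [gegenbauer, Polynomial.eval_mul, Polynomial.eval_C, Polynomial.eval_X]
  ring

theorem integral_pow_mul_gegenbauer (hlam : 1 / 2 ≤ lam) (k m : ℕ) :
    (∫ t in (-1 : ℝ)..1, t ^ m * ((gegenbauer lam k).eval t * gegenbauerWeight lam t)) *
        gaussianRadialMoment (m + k + 2 * lam + 1) =
      (gegenbauer lam k).eval 1 *
        (hermiteMoment m k * (√(2 * Real.pi) * gaussianRadialMoment (2 * lam))) := by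
  induction k using Nat.twoStepInduction generalizing m with
  | zero => simpa [gegenbauer] using integral_pow_mul_gegenbauerWeight hlam m
  | one =>
    have hmoment : hermiteMoment m 1 = hermiteMoment (m + 1) 0 := by
      rcases m with _ | m <;> simp [hermiteMoment]
    have h := integral_pow_mul_gegenbauerWeight hlam (m + 1)
    rw [integral_pow_mul_gegenbauer_one, hmoment]
    simp only [gegenbauer, Polynomial.eval_mul, Polynomial.eval_C, Polynomial.eval_X]
    push_cast at h ⊢
    linear_combination 2 * lam * h
  | more k ih₀ ih₁ =>
    have hrec := integral_pow_mul_gegenbauer_add_two hlam k m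
    have hend₀ := succ_mul_eval_one_gegenbauer_succ lam k
    have hend₁ := succ_mul_eval_one_gegenbauer_succ lam (k + 1)
    have hhermite := congrArg (Nat.cast (R := ℝ)) (hermiteMoment_add_two_right m k)
    have hradial := gaussianRadialMoment_add_two (p := m + k + 2 * lam + 1) (by
      have : (0 : ℝ) ≤ m + k := by positivity
      linarith)
    have h₀ := ih₀ m
    have h₁ := ih₁ (m + 1)
    rw [hermiteMoment_succ_succ] at h₁
    push_cast at h₁ hhermite hend₁ ⊢
    rw [show (m + 1 + (k + 1) + 2 * lam + 1 : ℝ) = m + k + 2 * lam + 1 + 2 by ring, hradial] at h₁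
    rw [show (m + (k + 2) + 2 * lam + 1 : ℝ) = m + k + 2 * lam + 1 + 2 by ring, hradial,
      eq_sub_of_add_eq hhermite]
    refine mul_left_cancel₀ (show (k + 2 : ℝ) ≠ 0 by positivity) ?_
    linear_combination (m + k + 2 * lam + 2) * gaussianRadialMoment (m + k + 2 * lam + 1) * hrec +
      2 * (k + 1 + lam) * h₁ - (k + 2 * lam) * (m + k + 2 * lam + 2) * h₀ +
      (m + k + 2 * lam + 2) *
        (hermiteMoment m k * (√(2 * Real.pi) * gaussianRadialMoment (2 * lam))) * hend₀ +
      (k - m) * (hermiteMoment m k * (√(2 * Real.pi) * gaussianRadialMoment (2 * lam))) * hend₁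

end GegenbauerMoments

section FunkHecke

open MvPolynomial

lemma sphereArea_mul_gaussianRadialMoment (m : ℕ) :
    sphereArea m * gaussianRadialMoment m = (2 * Real.pi) ^ (((m : ℝ) + 1) / 2) := by
  simpa [sphereArea, Measure.real] using toSphere_univ_mul_gaussianRadialMoment (ι := Fin (m + 1))

variable {n : ℕ}

lemma sphereArea_mul_integral_pow_mul_gegenbauer (hn : 2 ≤ n) (k m : ℕ) :
    sphereArea (n - 1) * (∫ t in (-1 : ℝ)..1, t ^ m *
        ((gegenbauer ((n - 1) / 2) k).eval t * gegenbauerWeight ((n - 1) / 2) t)) *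
        gaussianRadialMoment (m + k + n) =
      (gegenbauer ((n - 1) / 2) k).eval 1 *
        (hermiteMoment m k * (2 * Real.pi) ^ (((n : ℝ) + 1) / 2)) := by
  have hn' : (2 : ℝ) ≤ n := by exact_mod_cast hn
  have hequator := sphereArea_mul_gaussianRadialMoment (n - 1)
  have hmoment := integral_pow_mul_gegenbauer (lam := (n - 1) / 2) (by linarith) k m
  rw [Nat.cast_sub (by lia), Nat.cast_one, sub_add_cancel] at hequator
  rw [mul_div_cancel₀ _ two_ne_zero, add_assoc _ _ (1 : ℝ), sub_add_cancel] at hmoment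
  have hpow : (2 * Real.pi) ^ (((n : ℝ) + 1) / 2) =
      √(2 * Real.pi) * (2 * Real.pi) ^ ((n : ℝ) / 2) := by
    rw [Real.sqrt_eq_rpow, ← Real.rpow_add (by positivity)]
    ring_nf
  rw [hpow, ← hequator]
  linear_combination sphereArea (n - 1) * hmoment

variable {k : ℕ} {P : MvPolynomial (Fin (n + 1)) ℂ}

lemma integral_inner_pow_mul_harmonic (hn : 2 ≤ n) (hP : P.IsHomogeneous k)
    (hΔ : ∑ i, pderiv i (pderiv i P) = 0) {η : EuclideanSpace ℝ (Fin (n + 1))} (hη : ‖η‖ = 1)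
    (m : ℕ) :
    ∫ ξ : Metric.sphere (0 : EuclideanSpace ℝ (Fin (n + 1))) 1,
        ((⟪(ξ : EuclideanSpace ℝ (Fin (n + 1))), η⟫ : ℝ) : ℂ) ^ m * eval (complexify ξ) P
          ∂(volume : Measure (EuclideanSpace ℝ (Fin (n + 1)))).toSphere =
      eval (complexify η) P *
        ((sphereArea (n - 1) / (gegenbauer ((n - 1) / 2) k).eval 1 : ℝ) : ℂ) *
        ((∫ t in (-1 : ℝ)..1, t ^ m *
          ((gegenbauer ((n - 1) / 2) k).eval t * gegenbauerWeight ((n - 1) / 2) t) : ℝ) : ℂ) := by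
  have hn' : (2 : ℝ) ≤ n := by exact_mod_cast hn
  have hradial : (gaussianRadialMoment (m + k + n) : ℂ) ≠ 0 :=
    Complex.ofReal_ne_zero.2 (gaussianRadialMoment_pos (by
      have : (0 : ℝ) ≤ m + k := by positivity
      linarith)).ne'
  have hend : (((gegenbauer ((n - 1) / 2) k).eval 1 : ℝ) : ℂ) ≠ 0 :=
    Complex.ofReal_ne_zero.2 (eval_one_gegenbauer_pos (by linarith) k).ne'
  have hsphere := integral_sphere_inner_pow_mul_harmonic hη m hP hΔ
  have hinterval := congrArg Complex.ofReal (sphereArea_mul_integral_pow_mul_gegenbauer hn k m)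
  simp only [Fintype.card_fin, Nat.add_sub_cancel, Nat.cast_add, Nat.cast_one] at hsphere
  refine mul_right_cancel₀ hradial (hsphere.trans ?_)
  simp only [Complex.ofReal_mul, Complex.ofReal_natCast, Complex.ofReal_div] at hinterval ⊢
  rw [mul_div_assoc', div_mul_eq_mul_div, div_mul_eq_mul_div, eq_div_iff hend]
  linear_combination -eval (complexify η) P * hinterval

/-- The height `⟪ξ, η⟫` of a point `ξ` of the unit sphere in the direction `η`, as a map into the
interval `[-1, 1]` on which the zonal functions of the Funk–Hecke formula live. -/
def sphereHeight {V : Type*} [NormedAddCommGroup V] [InnerProductSpace ℝ V]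
    (η ξ : Metric.sphere (0 : V) 1) : Set.Icc (-1 : ℝ) 1 :=
  ⟨⟪(ξ : V), (η : V)⟫, abs_le.1 (by
    simpa only [norm_eq_of_mem_sphere, mul_one] using abs_real_inner_le_norm (ξ : V) η)⟩

lemma continuous_sphereHeight {V : Type*} [NormedAddCommGroup V] [InnerProductSpace ℝ V]
    (η : Metric.sphere (0 : V) 1) : Continuous (sphereHeight η) :=
  (continuous_subtype_val.inner continuous_const).subtype_mk _

theorem integral_sphereHeight_mul_harmonic (hn : 2 ≤ n) (hP : P.IsHomogeneous k)
    (hΔ : ∑ i, pderiv i (pderiv i P) = 0)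
    (η : Metric.sphere (0 : EuclideanSpace ℝ (Fin (n + 1))) 1) (f : C(Set.Icc (-1 : ℝ) 1, ℂ)) :
    ∫ ξ, f (sphereHeight η ξ) * eval (complexify ξ) P
        ∂(volume : Measure (EuclideanSpace ℝ (Fin (n + 1)))).toSphere =
      ∫ t, f t * (eval (complexify η) P *
        ((sphereArea (n - 1) / (gegenbauer ((n - 1) / 2) k).eval 1 : ℝ) : ℂ) *
        ((gegenbauer ((n - 1) / 2) k).eval (t : ℝ) * gegenbauerWeight ((n - 1) / 2) t : ℝ))
        ∂(volume.comap Subtype.val) := by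
  have hn' : (2 : ℝ) ≤ n := by exact_mod_cast hn
  have hw : Continuous (gegenbauerWeight (((n : ℝ) - 1) / 2)) :=
    continuous_gegenbauerWeight (by linarith)
  have hdensity : Continuous fun t : ℝ => eval (complexify η) P *
      ((sphereArea (n - 1) / (gegenbauer ((n - 1) / 2) k).eval 1 : ℝ) : ℂ) *
      ((gegenbauer ((n - 1) / 2) k).eval t * gegenbauerWeight ((n - 1) / 2) t : ℝ) := by
    fun_prop
  refine integral_comp_mul_eq_of_moments_eq (φ' := id) (continuous_sphereHeight η).measurable
    (((continuous_eval_complexify P).comp continuous_subtype_val).integrable_of_hasCompactSupport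
      (.of_compactSpace _))
    measurable_id
    ((integrableOn_iff_comap_subtypeVal measurableSet_Icc).1 hdensity.integrableOn_Icc)
    (fun m => (integral_inner_pow_mul_harmonic hn hP hΔ (norm_eq_of_mem_sphere η) m).trans ?_) f
  rw [intervalIntegral_eq_integral_Icc (by norm_num), ← integral_complex_ofReal,
    ← integral_const_mul]
  congr with t
  simp only [id, Function.comp_apply]
  push_cast
  ring

end FunkHecke

/-- The Funk–Hecke formula on `Sⁿ`:
`∫_{Sⁿ} f(ξᵀη) Y(ξ) dξ = Y(η) (|S^{n-1}|/C_k^{(n-1)/2}(1)) ∫_{-1}^1 f(t) C_k^{(n-1)/2}(t) (1-t²)^{n/2-1} dt`. -/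
theorem funk_hecke
    (n k : ℕ) (hn : 2 ≤ n)
    (σ : Measure (Metric.sphere (0 : EuclideanSpace ℝ (Fin (n + 1))) 1))
    (hσ : σ = (volume : Measure (EuclideanSpace ℝ (Fin (n + 1)))).toSphere)
    (f : ℝ → ℂ) (hf : ContinuousOn f (Set.Icc (-1) 1))
    (Y : EuclideanSpace ℝ (Fin (n + 1)) → ℂ) (hY : IsSphericalHarmonic n k Y)
    (η : Metric.sphere (0 : EuclideanSpace ℝ (Fin (n + 1))) 1) :
    ∫ ξ : Metric.sphere (0 : EuclideanSpace ℝ (Fin (n + 1))) 1,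
        f ⟪(ξ : EuclideanSpace ℝ (Fin (n + 1))), (η : EuclideanSpace ℝ (Fin (n + 1)))⟫ * Y ξ ∂σ
      = Y η * ((sphereArea (n - 1) / (gegenbauer (((n : ℝ) - 1) / 2) k).eval 1 : ℝ) : ℂ)
          * ∫ t in (-1 : ℝ)..1,
              f t * (((gegenbauer (((n : ℝ) - 1) / 2) k).eval t : ℝ) : ℂ)
                * (((1 - t ^ 2) ^ ((n : ℝ) / 2 - 1) : ℝ) : ℂ) := by
  obtain ⟨P, hP, hΔ, hYP⟩ := hY
  obtain rfl : Y = fun x => MvPolynomial.eval (complexify x) P := funext hYP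
  subst hσ
  let F : C(Set.Icc (-1 : ℝ) 1, ℂ) :=
    ⟨(Set.Icc (-1) 1).domRestrict f, continuousOn_iff_continuous_domRestrict.1 hf⟩
  rw [intervalIntegral_eq_integral_Icc (by norm_num), ← integral_const_mul]
  refine (integral_sphereHeight_mul_harmonic hn hP hΔ η F).trans ?_
  congr with t
  rw [gegenbauerWeight, show ((n : ℝ) - 1) / 2 - 1 / 2 = n / 2 - 1 by ring]
  change f t * _ = _
  push_cast
  ring

end
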